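/- arXiv:2603.18674 — 2 statements merged into one kernel-verified Lean document; each statement's English description precedes it below -/
import Mathlib

section
/- For the wheel graph W_d = C_d + K₁ with d ≥ 3 (the join of a single vertex with the cycle on d vertices), the 2-tone chromatic number equals 7 if d ∈ {5, 6, 8, 9}; equals 8 if d ∈ {3, 4, 7} or 10 ≤ d ≤ 15; and equals ⌈(5 + √(1 + 8d))/2⌉ if d ≥ 11. -/
/-- A `t`-tone `k`-coloring of a simple graph `G`: each vertex gets a set of `t`
distinct colors from `{1,…,k}`, and any two distinct vertices in the same
connected component share fewer colors than their distance. -/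
def IsTToneColoring {V : Type*} (G : SimpleGraph V) (t k : ℕ) (f : V → Finset ℕ) : Prop :=
  (∀ v, f v ⊆ Finset.Icc 1 k ∧ (f v).card = t) ∧
  ∀ u v : V, u ≠ v → G.Reachable u v → ((f u) ∩ (f v)).card < G.dist u v

/-- The `t`-tone chromatic number: the least `k` admitting a `t`-tone `k`-coloring. -/
noncomputable def toneNumber {V : Type*} (G : SimpleGraph V) (t : ℕ) : ℕ :=
  sInf {k | ∃ f : V → Finset ℕ, IsTToneColoring G t k f}

/-- The wheel graph `W_d`: the join of a single hub vertex (`none`) with the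
cycle `C_d` on the vertices `some i`. -/
def wheelGraph (d : ℕ) : SimpleGraph (Option (Fin d)) :=
  SimpleGraph.fromRel (fun u v =>
    u = none ∨ ∃ i j : Fin d, u = some i ∧ v = some j ∧ (SimpleGraph.cycleGraph d).Adj i j)

/-!
In a wheel all distances are at most two, so a 2-tone `k`-coloring is an injective assignment of
pairs that are disjoint along edges. The hub uses up two colors, and the rim becomes a cycle of
length `d` in the Kneser graph `K(k - 2, 2)`; the question is which `K(n, 2)` contains `C_d`.

For `n ≥ 6` every `C_d` with `3 ≤ d ≤ n.choose 2` occurs, by induction on `n`: a Hamilton cycle of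
`K(n, 2)` is a vertex cover of `K(n + 1, 2)`, because any two of the remaining pairs share the new
point. Hence a missing vertex has all its neighbors on the cycle, and as they make up more than half
of the cycle, two of them are consecutive and the vertex fits in between. `K(5, 2)` is the Petersen
graph, strongly regular with parameters `(10, 3, 0, 1)`, which rules out the lengths 3, 4, 7, 10.
-/

open Finset Function SimpleGraph

section ToneColoring

variable {V : Type*}

theorem card_inter_lt_iff_ne {α : Type*} [DecidableEq α] {r : ℕ} {s t : Finset α}
    (hs : #s = r) (ht : #t = r) : #(s ∩ t) < r ↔ s ≠ t := by
  rw [iff_not_comm, not_lt]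
  constructor
  · rintro rfl
    rw [inter_self, hs]
  · intro h
    have hst : s ∩ t = s := eq_of_subset_of_card_le inter_subset_left (by omega)
    exact eq_of_subset_of_card_le (inter_eq_left.mp hst) (by omega)

theorem isTToneColoring_two_iff_of_dist_le_two {G : SimpleGraph V} (hconn : G.Preconnected)
    (hdist : ∀ u v, G.dist u v ≤ 2) {k : ℕ} {f : V → Finset ℕ} :
    IsTToneColoring G 2 k f ↔ (∀ v, f v ⊆ Icc 1 k ∧ #(f v) = 2) ∧ Injective f ∧
      ∀ u v, G.Adj u v → Disjoint (f u) (f v) := by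
  have inter_lt_dist_iff (hf : ∀ v, #(f v) = 2) (u v : V) (huv : u ≠ v) :
      #(f u ∩ f v) < G.dist u v ↔ f u ≠ f v ∧ (G.Adj u v → Disjoint (f u) (f v)) := by
    by_cases hadj : G.Adj u v
    · rw [dist_eq_one_iff_adj.mpr hadj, Nat.lt_one_iff, card_eq_zero,
        ← disjoint_iff_inter_eq_empty]
      refine ⟨fun h => ⟨fun he => ?_, fun _ => h⟩, fun h => h.2 hadj⟩
      have hv := hf v
      rw [he, disjoint_self_iff_empty] at h
      simp [h] at hv
    · have hpos := (hconn u v).pos_dist_of_ne huv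
      have hne_one := mt dist_eq_one_iff_adj.mp hadj
      have hdist_eq : G.dist u v = 2 := by have := hdist u v; omega
      simp [hdist_eq, card_inter_lt_iff_ne (hf u) (hf v), hadj]
  constructor
  · rintro ⟨hf, h⟩
    have key u v huv := (inter_lt_dist_iff (fun w => (hf w).2) u v huv).mp (h u v huv (hconn u v))
    exact ⟨hf, fun u v => not_imp_not.mp fun huv => (key u v huv).1,
      fun u v hadj => (key u v hadj.ne).2 hadj⟩
  · rintro ⟨hf, hinj, hdisj⟩
    exact ⟨hf, fun u v huv _ => (inter_lt_dist_iff (fun w => (hf w).2) u v huv).mpr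
      ⟨hinj.ne huv, hdisj u v⟩⟩

variable {G : SimpleGraph (Option V)}

theorem reachable_and_dist_le_two_of_adj_none (hub : ∀ v, G.Adj none (some v))
    (u v : Option V) : G.Reachable u v ∧ G.dist u v ≤ 2 := by
  have walk_to_hub (w : Option V) : ∃ p : G.Walk w none, p.length ≤ 1 := by
    cases w with
    | none => exact ⟨.nil, Nat.zero_le _⟩
    | some w => exact ⟨(hub w).symm.toWalk, le_rfl⟩
  obtain ⟨p, hp⟩ := walk_to_hub u
  obtain ⟨q, hq⟩ := walk_to_hub v
  refine ⟨(p.append q.reverse).reachable, (dist_le (p.append q.reverse)).trans ?_⟩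
  rw [Walk.length_append, Walk.length_reverse]
  omega

end ToneColoring

/-- The Kneser graph `K(α, r)` on the `r`-element subsets of `α`, adjacent when disjoint.
Distinctness is demanded as well so that `r = 0` gives a loopless graph. -/
def kneserGraph (α : Type*) (r : ℕ) : SimpleGraph {s : Finset α // #s = r} where
  Adj s t := s ≠ t ∧ Disjoint s.1 t.1
  symm := ⟨fun _ _ h => ⟨h.1.symm, h.2.symm⟩⟩
  loopless := ⟨fun _ h => h.1 rfl⟩

section Kneser

variable {α β V : Type*} {r : ℕ}

instance [DecidableEq α] : DecidableRel (kneserGraph α r).Adj :=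
  fun s t => inferInstanceAs (Decidable (s ≠ t ∧ Disjoint s.1 t.1))

/-- The copy of `K(α, r)` in `K(β, r)` induced by an embedding `α ↪ β`. -/
def kneserGraphMap (e : α ↪ β) : Copy (kneserGraph α r) (kneserGraph β r) where
  toHom :=
    { toFun s := ⟨s.1.map e, (card_map e).trans s.2⟩
      map_rel' h := ⟨fun he => h.1 (Subtype.ext (map_injective e (congrArg Subtype.val he))),
        (disjoint_map e).mpr h.2⟩ }
  injective' _ _ h := Subtype.ext (map_injective e (congrArg Subtype.val h))

theorem isVertexCover_range_kneserGraphMap {e : α ↪ β} (he : (Set.range e)ᶜ.Subsingleton) :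
    (kneserGraph β r).IsVertexCover (Set.range (kneserGraphMap (r := r) e)) := by
  have exists_notMem {s : {s : Finset β // #s = r}} (hs : s ∉ Set.range (kneserGraphMap e)) :
      ∃ x ∈ s.1, x ∉ Set.range e := by
    by_contra! h
    obtain ⟨t, ht⟩ : ∃ t : Finset α, t.map e = s.1 :=
      ⟨s.1.preimage e e.injective.injOn, by
        classical
        rw [map_eq_image, image_preimage, filter_true_of_mem h]⟩
    exact hs ⟨⟨t, by rw [← card_map e, ht, s.2]⟩, Subtype.ext ht⟩
  intro s t hst
  by_contra! h
  obtain ⟨x, hxs, hx⟩ := exists_notMem h.1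
  obtain ⟨y, hyt, hy⟩ := exists_notMem h.2
  exact disjoint_left.mp hst.2 hxs (he hx hy ▸ hyt)

theorem kneserGraph_fin_isContained_of_le {m n : ℕ} (h : m ≤ n) :
    kneserGraph (Fin m) r ⊑ kneserGraph (Fin n) r :=
  ⟨kneserGraphMap (Fin.castLEEmb h)⟩

theorem isContained_kneserGraph_fin_iff {H : SimpleGraph V} {S : Finset α} {n : ℕ} (hS : #S = n) :
    H ⊑ kneserGraph (Fin n) r ↔ ∃ g : V → Finset α, (∀ v, g v ⊆ S ∧ #(g v) = r) ∧ Injective g ∧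
      ∀ u v, H.Adj u v → Disjoint (g u) (g v) := by
  let e : Fin n ↪ α := (S.equivFinOfCardEq hS).symm.toEmbedding.trans (.subtype _)
  have map_univ : univ.map e = S := by
    rw [← Finset.map_map, map_univ_equiv, univ_eq_attach, attach_map_val]
  constructor
  · rintro ⟨φ⟩
    let ψ := (kneserGraphMap (r := r) e).comp φ
    refine ⟨fun v => (φ v).1.map e, fun v => ⟨?_, (card_map e).trans (φ v).2⟩,
      fun u v h => ψ.injective (Subtype.ext h), fun u v h => (ψ.toHom.map_adj h).2⟩
    exact map_univ ▸ map_subset_map.mpr (subset_univ _)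
  · rintro ⟨g, hg, hinj, hdisj⟩
    have exists_preimage (v : V) : ∃ s : Finset (Fin n), s.map e = g v := by
      obtain ⟨s, -, hs⟩ := subset_map_iff.mp (map_univ ▸ (hg v).1)
      exact ⟨s, hs.symm⟩
    choose s hs using exists_preimage
    let φ (v : V) : {t : Finset (Fin n) // #t = r} :=
      ⟨s v, by rw [← card_map e, hs, (hg v).2]⟩
    have hφ : Injective φ := fun u v h =>
      hinj (by rw [← hs u, ← hs v, show s u = s v from congrArg Subtype.val h])
    refine ⟨⟨⟨φ, fun {u v} h => ⟨hφ.ne h.ne, ?_⟩⟩, hφ⟩⟩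
    rw [← disjoint_map e, hs, hs]
    exact hdisj u v h

theorem card_kneserGraph_fin (n r : ℕ) :
    Fintype.card {s : Finset (Fin n) // #s = r} = n.choose r := by
  rw [Fintype.card_finset_len, Fintype.card_fin]

theorem kneserGraph_isRegularOfDegree [Fintype α] [DecidableEq α] (hr : r ≠ 0) :
    (kneserGraph α r).IsRegularOfDegree ((Fintype.card α - r).choose r) := by
  intro s
  have card_compl_s : #s.1ᶜ = Fintype.card α - r := by rw [card_compl, s.2]
  rw [← card_compl_s, ← card_powersetCard, ← card_neighborFinset_eq_degree]
  refine card_bij (fun t _ => t.1) (fun t ht => ?_) (fun t _ u _ => Subtype.ext) (fun t ht => ?_)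
  · rw [mem_neighborFinset] at ht
    exact mem_powersetCard.mpr ⟨subset_compl_iff_disjoint_left.mpr ht.2, t.2⟩
  · obtain ⟨hts, hcard⟩ := mem_powersetCard.mp ht
    have hdisj : Disjoint s.1 t := subset_compl_iff_disjoint_left.mp hts
    refine ⟨⟨t, hcard⟩, (mem_neighborFinset _ _ _).mpr ⟨?_, hdisj⟩, rfl⟩
    rintro rfl
    exact hr (hcard ▸ card_eq_zero.mpr (disjoint_self_iff_empty t |>.mp hdisj))

end Kneser

section Hub

variable {V : Type*} {G : SimpleGraph (Option V)}

theorem exists_isTToneColoring_two_iff_isContained_kneserGraph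
    (hub : ∀ v, G.Adj none (some v)) (n : ℕ) :
    (∃ f, IsTToneColoring G 2 (n + 2) f) ↔ G.comap some ⊑ kneserGraph (Fin n) 2 := by
  have hdist := reachable_and_dist_le_two_of_adj_none hub
  simp only [isTToneColoring_two_iff_of_dist_le_two (fun u v => (hdist u v).1)
    (fun u v => (hdist u v).2)]
  constructor
  · rintro ⟨f, hf, hinj, hdisj⟩
    have hS : #(Icc 1 (n + 2) \ f none) = n := by
      rw [card_sdiff_of_subset (hf none).1, (hf none).2, Nat.card_Icc, Nat.add_sub_cancel,
        Nat.add_sub_cancel]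
    exact (isContained_kneserGraph_fin_iff hS).mpr ⟨fun v => f (some v),
      fun v => ⟨subset_sdiff.mpr ⟨(hf _).1, (hdisj _ _ (hub v)).symm⟩, (hf _).2⟩,
      hinj.comp (Option.some_injective V), fun u v => hdisj (some u) (some v)⟩
  · intro h
    obtain ⟨g, hg, hinj, hdisj⟩ := (isContained_kneserGraph_fin_iff (Nat.card_Icc 1 n)).mp h
    have disjoint_hub (v : V) : Disjoint {n + 1, n + 2} (g v) :=
      Disjoint.mono_right (hg v).1 (by simp)
    have hub_ne (v : V) : ({n + 1, n + 2} : Finset ℕ) ≠ g v :=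
      (disjoint_hub v).ne (insert_ne_empty _ _)
    refine ⟨fun v => v.elim {n + 1, n + 2} g, ?_, ?_, ?_⟩
    · rintro (_ | v)
      · exact ⟨by simp [insert_subset_iff], card_pair (by omega)⟩
      · exact ⟨(hg v).1.trans (Icc_subset_Icc_right (by omega)), (hg v).2⟩
    · rintro (_ | u) (_ | v) huv
      · rfl
      · exact absurd huv (hub_ne v)
      · exact absurd huv.symm (hub_ne u)
      · exact congrArg some (hinj huv)
    · rintro (_ | u) (_ | v) huv
      · exact absurd huv G.irrefl
      · exact disjoint_hub v
      · exact (disjoint_hub u).symm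
      · exact hdisj u v huv

theorem toneNumber_two_eq_of_isLeast (hub : ∀ v, G.Adj none (some v)) {n : ℕ}
    (hn : IsLeast {m | G.comap some ⊑ kneserGraph (Fin m) 2} n) :
    toneNumber G 2 = n + 2 := by
  have coloring_iff := exists_isTToneColoring_two_iff_isContained_kneserGraph hub
  refine IsLeast.csInf_eq ⟨(coloring_iff n).mpr hn.1, ?_⟩
  rintro k ⟨f, hf⟩
  have two_le : 2 ≤ k := by
    simpa [(hf.1 none).2] using card_le_card (hf.1 none).1
  obtain ⟨m, rfl⟩ := Nat.exists_eq_add_of_le' two_le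
  exact Nat.add_le_add_right (hn.2 ((coloring_iff m).mp ⟨f, hf⟩)) 2

end Hub

theorem wheelGraph_adj_none_some {d : ℕ} (i : Fin d) : (wheelGraph d).Adj none (some i) := by
  simp [wheelGraph]

theorem wheelGraph_comap_some (d : ℕ) : (wheelGraph d).comap some = cycleGraph d := by
  ext i j
  simp only [comap_adj, wheelGraph, fromRel_adj]
  constructor
  · simp [adj_comm]
  · intro h
    simp [h, h.ne]

theorem toneNumber_wheelGraph_two_of_isLeast {d n : ℕ}
    (hn : IsLeast {m | cycleGraph d ⊑ kneserGraph (Fin m) 2} n) :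
    toneNumber (wheelGraph d) 2 = n + 2 :=
  toneNumber_two_eq_of_isLeast wheelGraph_adj_none_some ((wheelGraph_comap_some d).symm ▸ hn)

/-- `f` lists the vertices of a cycle of length `d` of `G` in cyclic order; `finRotate d` is the
cyclic successor on `Fin d`. -/
structure IsCycleTraversal {V : Type*} (G : SimpleGraph V) {d : ℕ} (f : Fin d → V) : Prop where
  injective : Injective f
  adj_finRotate (i : Fin d) : G.Adj (f i) (f (finRotate d i))

theorem cycleGraph_isContained_iff_exists_isCycleTraversal {V : Type*} {G : SimpleGraph V} {d : ℕ}
    (hd : 2 ≤ d) : cycleGraph d ⊑ G ↔ ∃ f : Fin d → V, IsCycleTraversal G f := by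
  obtain ⟨n, rfl⟩ := Nat.exists_eq_add_of_le' hd
  constructor
  · rintro ⟨φ⟩
    refine ⟨φ, φ.injective, fun i => φ.toHom.map_adj ?_⟩
    rw [finRotate_apply, cycleGraph_adj]
    exact Or.inr (add_sub_cancel_left i 1)
  · rintro ⟨f, hinj, hadj⟩
    have hadj (i : Fin (n + 2)) : G.Adj (f i) (f (i + 1)) := finRotate_apply i ▸ hadj i
    refine ⟨⟨⟨f, fun {i j} hij => ?_⟩, hinj⟩⟩
    rcases cycleGraph_adj.mp hij with h | h
    · rw [sub_eq_iff_eq_add'.mp h]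
      exact (hadj j).symm
    · rw [sub_eq_iff_eq_add'.mp h]
      exact hadj i

theorem exists_adj_adj_of_lt_two_mul_card {V : Type*} {G : SimpleGraph V} [DecidableRel G.Adj]
    {d : ℕ} {f : Fin d → V} {v : V} (h : d < 2 * #{i | G.Adj v (f i)}) :
    ∃ i, G.Adj v (f i) ∧ G.Adj v (f (finRotate d i)) := by
  set A : Finset (Fin d) := {i | G.Adj v (f i)} with hA
  have card_lt : #(univ : Finset (Fin d)) < #A + #(A.map (finRotate d).symm.toEmbedding) := by
    rw [card_map, card_univ, Fintype.card_fin]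
    omega
  obtain ⟨i, hi⟩ := inter_nonempty_of_card_lt_card_add_card (subset_univ _) (subset_univ _) card_lt
  refine ⟨i, ?_⟩
  simpa [hA] using hi

namespace IsCycleTraversal

variable {V W : Type*} {G : SimpleGraph V} {H : SimpleGraph W} {d : ℕ}

theorem comp_copy {f : Fin d → V} (hf : IsCycleTraversal G f) (φ : Copy G H) :
    IsCycleTraversal H (φ ∘ f) :=
  ⟨φ.injective.comp hf.injective, fun i => φ.toHom.map_adj (hf.adj_finRotate i)⟩

theorem surjective_of_card_eq [Fintype V] {f : Fin d → V} (hf : IsCycleTraversal G f)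
    (hcard : Fintype.card V = d) : Surjective f :=
  ((Fintype.bijective_iff_injective_and_card f).mpr
    ⟨hf.injective, by rw [hcard, Fintype.card_fin]⟩).surjective

theorem adj_add_one {f : Fin (d + 1) → V} (hf : IsCycleTraversal G f) (i : Fin (d + 1)) :
    G.Adj (f i) (f (i + 1)) :=
  finRotate_apply i ▸ hf.adj_finRotate i

theorem comp_add_right {f : Fin (d + 1) → V} (hf : IsCycleTraversal G f) (k : Fin (d + 1)) :
    IsCycleTraversal G fun i => f (i + k) where
  injective := hf.injective.comp (add_left_injective k)
  adj_finRotate i := by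
    rw [finRotate_apply, add_right_comm]
    exact hf.adj_add_one (i + k)

theorem cons {f : Fin (d + 1) → V} (hf : IsCycleTraversal G f) {v : V} (hv : v ∉ Set.range f)
    (hfirst : G.Adj v (f 0)) (hlast : G.Adj (f (Fin.last d)) v) :
    IsCycleTraversal G (Fin.cons v f : Fin (d + 2) → V) where
  injective := Fin.cons_injective_iff.mpr ⟨hv, hf.injective⟩
  adj_finRotate i := by
    rw [finRotate_apply]
    induction i using Fin.cases with
    | zero => simpa using hfirst
    | succ i =>
      induction i using Fin.lastCases with
      | last => simpa using hlast
      | cast i =>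
        have := hf.adj_add_one i.castSucc
        rw [Fin.coeSucc_eq_succ] at this
        rw [Fin.succ_castSucc, Fin.coeSucc_eq_succ, ← Fin.succ_castSucc]
        simpa using this

theorem exists_insert [DecidableRel G.Adj] {f : Fin d → V} (hf : IsCycleTraversal G f) {v : V}
    (hv : v ∉ Set.range f) (h : d < 2 * #{i | G.Adj v (f i)}) :
    ∃ f' : Fin (d + 1) → V, IsCycleTraversal G f' ∧ Set.range f ⊆ Set.range f' := by
  obtain ⟨i, hi, hi'⟩ := exists_adj_adj_of_lt_two_mul_card h
  obtain _ | d := d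
  · exact i.elim0
  rw [finRotate_apply] at hi'
  have range_rotate : Set.range (fun j => f (j + (i + 1))) = Set.range f :=
    (Equiv.addRight (i + 1)).surjective.range_comp f
  refine ⟨_, (hf.comp_add_right (i + 1)).cons (range_rotate ▸ hv) ?_ ?_, ?_⟩
  · rwa [zero_add]
  · rw [add_comm i 1, ← add_assoc, Fin.last_add_one, zero_add]
    exact hi.symm
  · rw [Fin.range_cons, range_rotate]
    exact Set.subset_insert _ _

variable [Fintype V] [DecidableRel G.Adj]

theorem card_filter_adj_eq_degree {f : Fin d → V} (hf : IsCycleTraversal G f)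
    (hcover : G.IsVertexCover (Set.range f)) {v : V} (hv : v ∉ Set.range f) :
    #{i | G.Adj v (f i)} = G.degree v := by
  rw [← card_neighborFinset_eq_degree, ← card_map ⟨f, hf.injective⟩]
  congr 1
  ext w
  simp only [mem_map, mem_filter, mem_univ, true_and, Embedding.coeFn_mk, mem_neighborFinset]
  refine ⟨?_, fun hw => ?_⟩
  · rintro ⟨i, hi, rfl⟩
    exact hi
  · obtain ⟨i, rfl⟩ := (hcover hw).resolve_left hv
    exact ⟨i, hw, rfl⟩

theorem exists_of_isVertexCover {f : Fin d → V} (hf : IsCycleTraversal G f)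
    (hcover : G.IsVertexCover (Set.range f)) {e : ℕ} (hde : d ≤ e) (heV : e ≤ Fintype.card V)
    (hdeg : ∀ v ∉ Set.range f, e ≤ 2 * G.degree v) :
    ∃ f' : Fin e → V, IsCycleTraversal G f' ∧ Set.range f ⊆ Set.range f' := by
  induction e, hde using Nat.le_induction with
  | base => exact ⟨f, hf, subset_rfl⟩
  | succ e _ ih =>
    obtain ⟨g, hg, hfg⟩ := ih (by omega) fun v hv => (Nat.le_succ e).trans (hdeg v hv)
    obtain ⟨v, hv⟩ : ∃ v, v ∉ Set.range g := by
      by_contra! hsurj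
      have := Fintype.card_le_of_surjective g hsurj
      rw [Fintype.card_fin] at this
      omega
    have hlt : e < 2 * #{i | G.Adj v (g i)} := by
      rw [hg.card_filter_adj_eq_degree (hcover.subset hfg) hv]
      exact hdeg v fun h => hv (hfg h)
    obtain ⟨g', hg', hgg'⟩ := hg.exists_insert hv hlt
    exact ⟨g', hg', hfg.trans hgg'⟩

end IsCycleTraversal

section StronglyRegular

variable {V : Type*} [Fintype V] {G : SimpleGraph V} [DecidableRel G.Adj] {n k : ℕ}

theorem not_adj_of_isSRGWith_zero {μ : ℕ} (hG : G.IsSRGWith n k 0 μ) {a b c : V} (hab : G.Adj a b)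
    (hbc : G.Adj b c) : ¬G.Adj a c := fun hac =>
  (Fintype.card_eq_zero_iff.mp (hG.of_adj a c hac)).false ⟨b, hab, hbc.symm⟩

theorem eq_of_isSRGWith_zero_one (hG : G.IsSRGWith n k 0 1) {a b b' c : V} (hac : a ≠ c)
    (hab : G.Adj a b) (hbc : G.Adj b c) (hab' : G.Adj a b') (hbc' : G.Adj b' c) : b = b' := by
  have := Fintype.card_le_one_iff_subsingleton.mp
    (hG.of_not_adj hac (not_adj_of_isSRGWith_zero hG hab hbc)).le
  exact congrArg Subtype.val (Subsingleton.elim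
    (⟨b, hab, hbc.symm⟩ : G.commonNeighbors a c) ⟨b', hab', hbc'.symm⟩)

theorem exists_adj_adj_of_isSRGWith_one {ℓ : ℕ} (hG : G.IsSRGWith n k ℓ 1) {a c : V} (hne : a ≠ c)
    (hac : ¬G.Adj a c) : ∃ b, G.Adj a b ∧ G.Adj b c := by
  obtain ⟨b, hab, hcb⟩ := Fintype.card_pos_iff.mp ((hG.of_not_adj hne hac).symm ▸ zero_lt_one)
  exact ⟨b, hab, hcb.symm⟩

theorem IsCycleTraversal.ne_three_of_isSRGWith {μ d : ℕ} (hG : G.IsSRGWith n k 0 μ) {f : Fin d → V}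
    (hf : IsCycleTraversal G f) : d ≠ 3 := by
  rintro rfl
  exact not_adj_of_isSRGWith_zero hG (hf.adj_add_one 0) (hf.adj_add_one 1) (hf.adj_add_one 2).symm

theorem IsCycleTraversal.ne_four_of_isSRGWith {d : ℕ} (hG : G.IsSRGWith n k 0 1) {f : Fin d → V}
    (hf : IsCycleTraversal G f) : d ≠ 4 := by
  rintro rfl
  have : f 1 = f 3 := eq_of_isSRGWith_zero_one hG (hf.injective.ne (by decide))
    (hf.adj_add_one 0) (hf.adj_add_one 1) (hf.adj_add_one 3).symm (hf.adj_add_one 2).symm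
  exact absurd (hf.injective this) (by decide)

variable {d : ℕ} {f : Fin (d + 1) → V}

theorem IsCycleTraversal.not_adj_add_two {μ : ℕ} (hG : G.IsSRGWith n k 0 μ)
    (hf : IsCycleTraversal G f) (i : Fin (d + 1)) : ¬G.Adj (f i) (f (i + 1 + 1)) :=
  not_adj_of_isSRGWith_zero hG (hf.adj_add_one i) (hf.adj_add_one (i + 1))

theorem IsCycleTraversal.not_adj_add_three (hG : G.IsSRGWith n k 0 1) (hf : IsCycleTraversal G f)
    (hd : 3 ≤ d) (i : Fin (d + 1)) : ¬G.Adj (f i) (f (i + 1 + 1 + 1)) := by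
  intro h
  obtain ⟨d, rfl⟩ := Nat.exists_eq_add_of_le' hd
  have hne (j : Fin (d + 3 + 1)) : j ≠ j + 1 + 1 := by
    simp [add_assoc, Fin.ext_iff, Fin.val_add, Nat.mod_eq_of_lt]
  exact absurd (hf.injective (eq_of_isSRGWith_zero_one hG (hf.injective.ne (hne i))
    (hf.adj_add_one i) (hf.adj_add_one (i + 1)) h (hf.adj_add_one (i + 1 + 1)).symm)) (hne _)

theorem IsCycleTraversal.ne_seven_of_isSRGWith {d : ℕ} (hG : G.IsSRGWith n 3 0 1) {f : Fin d → V}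
    (hf : IsCycleTraversal G f) : d ≠ 7 := by
  classical
  rintro rfl
  have hchord₂ := hf.not_adj_add_two hG
  have hchord₃ := hf.not_adj_add_three hG (by decide)
  obtain ⟨a, ha₀, ha₃⟩ := exists_adj_adj_of_isSRGWith_one hG
    (hf.injective.ne (show 0 ≠ 3 by decide)) (hchord₃ 0)
  obtain ⟨b, hb₃, hb₆⟩ := exists_adj_adj_of_isSRGWith_one hG
    (hf.injective.ne (show 3 ≠ 6 by decide)) (hchord₃ 3)
  have h24 : f 2 ≠ f 4 := hf.injective.ne (by decide)
  have ha2 : f 2 ≠ a := by rintro rfl; exact hchord₂ 0 ha₀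
  have ha4 : f 4 ≠ a := by rintro rfl; exact hchord₃ 4 ha₀.symm
  have hb2 : f 2 ≠ b := by rintro rfl; exact hchord₃ 6 hb₆.symm
  have hb4 : f 4 ≠ b := by rintro rfl; exact hchord₂ 4 hb₆
  have hab : a ≠ b := by
    rintro rfl
    exact not_adj_of_isSRGWith_zero hG ha₀ hb₆ (hf.adj_add_one 6).symm
  have hsub : {f 2, f 4, a, b} ⊆ G.neighborFinset (f 3) := by
    simp only [insert_subset_iff, singleton_subset_iff, mem_neighborFinset]
    exact ⟨(hf.adj_add_one 2).symm, hf.adj_add_one 3, ha₃.symm, hb₃⟩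
  have hcard := card_le_card hsub
  rw [card_neighborFinset_eq_degree, hG.regular.degree_eq] at hcard
  simp [*] at hcard

theorem IsCycleTraversal.not_adj_zero_four_of_isSRGWith {f : Fin 10 → V}
    (hG : G.IsSRGWith 10 k 0 1) (hf : IsCycleTraversal G f) : ¬G.Adj (f 0) (f 4) := by
  intro h04
  have hchord₂ := hf.not_adj_add_two hG
  have hchord₃ := hf.not_adj_add_three hG (by decide)
  have hsurj : Surjective f := hf.surjective_of_card_eq hG.card
  have no_four_cycle {a b b' c : Fin 10} (hac : a ≠ c) (hbb' : b ≠ b') (hab : G.Adj (f a) (f b))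
      (hbc : G.Adj (f b) (f c)) (hcb' : G.Adj (f c) (f b')) : ¬G.Adj (f b') (f a) := fun hb'a =>
    hf.injective.ne hbb' (eq_of_isSRGWith_zero_one hG (hf.injective.ne hac) hab hbc hb'a.symm
      hcb'.symm)
  have h59 : ¬G.Adj (f 5) (f 9) := fun h =>
    no_four_cycle (by decide) (by decide) h04 (hf.adj_add_one 4) h (hf.adj_add_one 9)
  obtain ⟨b, hb₅, hb₉⟩ := exists_adj_adj_of_isSRGWith_one hG
    (hf.injective.ne (show 5 ≠ 9 by decide)) h59
  obtain ⟨j, rfl⟩ := hsurj b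
  fin_cases j
  · exact not_adj_of_isSRGWith_zero hG h04 (hf.adj_add_one 4) hb₅.symm
  · exact no_four_cycle (by decide) (by decide) h04 (hf.adj_add_one 4) hb₅ (hf.adj_add_one 0).symm
  · exact hchord₃ 2 hb₅.symm
  · exact hchord₂ 3 hb₅.symm
  · exact not_adj_of_isSRGWith_zero hG h04 hb₉ (hf.adj_add_one 9).symm
  · exact hb₅.ne rfl
  · exact hchord₃ 6 hb₉
  · exact hchord₂ 5 hb₅
  · exact hchord₃ 5 hb₅
  · exact hb₉.ne rfl

theorem IsCycleTraversal.ne_ten_of_isSRGWith {d : ℕ} (hG : G.IsSRGWith 10 k 0 1) {f : Fin d → V}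
    (hf : IsCycleTraversal G f) : d ≠ 10 := by
  rintro rfl
  have hchord₂ := hf.not_adj_add_two hG
  have hchord₃ := hf.not_adj_add_three hG (by decide)
  have hchord₄ (i : Fin 10) : ¬G.Adj (f (0 + i)) (f (4 + i)) :=
    (hf.comp_add_right i).not_adj_zero_four_of_isSRGWith hG
  have hsurj : Surjective f := hf.surjective_of_card_eq hG.card
  obtain ⟨b, hb₀, hb₃⟩ := exists_adj_adj_of_isSRGWith_one hG
    (hf.injective.ne (show 0 ≠ 3 by decide)) (hchord₃ 0)
  obtain ⟨j, rfl⟩ := hsurj b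
  fin_cases j
  · exact hb₀.ne rfl
  · exact hchord₂ 1 hb₃
  · exact hchord₂ 0 hb₀
  · exact hb₃.ne rfl
  · exact hchord₄ 0 hb₀
  · exact hchord₂ 3 hb₃.symm
  · exact hchord₃ 3 hb₃.symm
  · exact hchord₄ 3 hb₃.symm
  · exact hchord₂ 8 hb₀.symm
  · exact hchord₄ 9 hb₃

end StronglyRegular

section KneserCycles

variable {d n r : ℕ}

theorem le_choose_of_cycleGraph_isContained (h : cycleGraph d ⊑ kneserGraph (Fin n) r) :
    d ≤ n.choose r := by
  obtain ⟨φ⟩ := h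
  simpa only [Fintype.card_fin, card_kneserGraph_fin] using
    Fintype.card_le_of_injective φ φ.injective

theorem kneserGraph_five_isSRGWith : (kneserGraph (Fin 5) 2).IsSRGWith 10 3 0 1 where
  card := card_kneserGraph_fin 5 2
  regular := kneserGraph_isRegularOfDegree two_ne_zero
  of_adj := by decide +kernel
  of_not_adj := by unfold Pairwise; decide +kernel

theorem not_cycleGraph_isContained_kneserGraph_five
    (hd : d = 3 ∨ d = 4 ∨ d = 7 ∨ 10 ≤ d) : ¬cycleGraph d ⊑ kneserGraph (Fin 5) 2 := by
  intro h
  have hle : d ≤ 10 := le_choose_of_cycleGraph_isContained h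
  obtain ⟨f, hf⟩ := (cycleGraph_isContained_iff_exists_isCycleTraversal (by omega)).mp h
  have hG := kneserGraph_five_isSRGWith
  have h3 := hf.ne_three_of_isSRGWith hG
  have h4 := hf.ne_four_of_isSRGWith hG
  have h7 := hf.ne_seven_of_isSRGWith hG
  have h10 := hf.ne_ten_of_isSRGWith hG
  omega

theorem not_cycleGraph_isContained_kneserGraph_four (hd : 3 ≤ d) :
    ¬cycleGraph d ⊑ kneserGraph (Fin 4) 2 := by
  intro h
  obtain ⟨f, hf⟩ := (cycleGraph_isContained_iff_exists_isCycleTraversal (by omega)).mp h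
  obtain ⟨d, rfl⟩ := Nat.exists_eq_add_of_le' hd
  have perfect_matching : ∀ s t u, (kneserGraph (Fin 4) 2).Adj s t →
      (kneserGraph (Fin 4) 2).Adj t u → s = u := by decide +kernel
  have := hf.injective (perfect_matching _ _ _ (hf.adj_add_one 0) (hf.adj_add_one (0 + 1)))
  simp [Fin.ext_iff, Fin.val_add, Nat.mod_eq_of_lt] at this

theorem lt_of_cycleGraph_isContained_kneserGraph {m : ℕ}
    (hn : ¬cycleGraph d ⊑ kneserGraph (Fin n) r) (hm : cycleGraph d ⊑ kneserGraph (Fin m) r) :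
    n < m :=
  lt_of_not_ge fun h => hn (hm.trans (kneserGraph_fin_isContained_of_le h))

/-- `l` lists, in cyclic order, the vertices of a cycle of length `d` in the Kneser graph
`K(n, r)`; phrased so that it can be decided for explicit lists. -/
def IsKneserCycle (n r d : ℕ) (l : List (Finset (Fin n))) : Prop :=
  l.length = d ∧ (∀ s ∈ l, #s = r) ∧ l.Nodup ∧
    ∀ i : Fin l.length, Disjoint (l.get i) (l.get (finRotate _ i))

instance (l : List (Finset (Fin n))) : Decidable (IsKneserCycle n r d l) :=
  inferInstanceAs (Decidable (_ ∧ _))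

theorem IsKneserCycle.isContained {l : List (Finset (Fin n))} (hl : IsKneserCycle n r d l)
    (hd : 2 ≤ d) : cycleGraph d ⊑ kneserGraph (Fin n) r := by
  obtain ⟨rfl, hcard, hnodup, hdisj⟩ := hl
  let f (i : Fin l.length) : {s : Finset (Fin n) // #s = r} := ⟨l.get i, hcard _ (l.get_mem i)⟩
  have hf : Injective f := fun i j h => hnodup.injective_get (congrArg Subtype.val h)
  have finRotate_ne (i : Fin l.length) : finRotate _ i ≠ i :=
    Equiv.Perm.mem_support.mp (support_finRotate_of_le hd ▸ mem_univ i)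
  exact (cycleGraph_isContained_iff_exists_isCycleTraversal hd).mpr
    ⟨f, hf, fun i => ⟨hf.ne (finRotate_ne i).symm, hdisj i⟩⟩

theorem cycleGraph_isContained_kneserGraph_five (hd : d = 5 ∨ d = 6 ∨ d = 8 ∨ d = 9) :
    cycleGraph d ⊑ kneserGraph (Fin 5) 2 := by
  have h5 : IsKneserCycle 5 2 5 [{0, 1}, {2, 3}, {0, 4}, {1, 2}, {3, 4}] := by decide
  have h6 : IsKneserCycle 5 2 6 [{0, 1}, {2, 3}, {0, 4}, {1, 2}, {0, 3}, {2, 4}] := by decide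
  have h8 : IsKneserCycle 5 2 8
    [{0, 1}, {2, 3}, {0, 4}, {1, 2}, {3, 4}, {0, 2}, {1, 3}, {2, 4}] := by decide
  have h9 : IsKneserCycle 5 2 9
    [{0, 1}, {2, 3}, {0, 4}, {1, 2}, {3, 4}, {0, 2}, {1, 4}, {0, 3}, {2, 4}] := by decide
  rcases hd with rfl | rfl | rfl | rfl
  exacts [h5.isContained (by decide), h6.isContained (by decide), h8.isContained (by decide),
    h9.isContained (by decide)]

theorem cycleGraph_isContained_kneserGraph_six_of_ge_ten (h₁ : 10 ≤ d) (h₂ : d ≤ 15) :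
    cycleGraph d ⊑ kneserGraph (Fin 6) 2 := by
  -- A 1-factorization of `K₆`, ordered so that adjacent factors meet in disjoint edges. Edges of
  -- one factor are disjoint, so the middle edge of a factor can be omitted.
  let factors : List (List (Finset (Fin 6))) := [[{0, 1}, {2, 3}, {4, 5}],
    [{0, 2}, {1, 4}, {3, 5}], [{2, 4}, {0, 3}, {1, 5}], [{0, 4}, {2, 5}, {1, 3}],
    [{0, 5}, {1, 2}, {3, 4}]]
  have hcycle : ∀ j < 6, IsKneserCycle 6 2 (10 + j)
      ((factors.take j).flatten ++ ((factors.drop j).map (·.eraseIdx 1)).flatten) := by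
    decide +kernel
  obtain ⟨j, rfl⟩ := Nat.exists_eq_add_of_le h₁
  exact (hcycle j (by omega)).isContained (by omega)

theorem cycleGraph_isContained_kneserGraph_six (h₁ : 3 ≤ d) (h₂ : d ≤ 15) :
    cycleGraph d ⊑ kneserGraph (Fin 6) 2 := by
  have h3 : IsKneserCycle 6 2 3 [{0, 1}, {2, 3}, {4, 5}] := by decide
  have h4 : IsKneserCycle 6 2 4 [{0, 1}, {2, 3}, {0, 4}, {2, 5}] := by decide
  have h7 : IsKneserCycle 6 2 7
    [{0, 1}, {2, 3}, {4, 5}, {0, 2}, {1, 3}, {0, 4}, {2, 5}] := by decide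
  obtain rfl | rfl | rfl | hd | hd :
      d = 3 ∨ d = 4 ∨ d = 7 ∨ (d = 5 ∨ d = 6 ∨ d = 8 ∨ d = 9) ∨ 10 ≤ d := by omega
  · exact h3.isContained (by decide)
  · exact h4.isContained (by decide)
  · exact h7.isContained (by decide)
  · exact (cycleGraph_isContained_kneserGraph_five hd).trans
      (kneserGraph_fin_isContained_of_le (by decide))
  · exact cycleGraph_isContained_kneserGraph_six_of_ge_ten hd h₂

theorem cycleGraph_twentyOne_isContained_kneserGraph_seven :
    cycleGraph 21 ⊑ kneserGraph (Fin 7) 2 := by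
  -- Blocks of three edges, invariant under the cyclic symmetry `k ↦ k + 1` of `Fin 7`.
  have h : IsKneserCycle 7 2 21
      ((List.finRange 7).flatMap fun k => [{k, k + 1}, {k + 2, k + 4}, {k, k + 3}]) := by
    decide +kernel
  exact h.isContained (by decide)

theorem cycleGraph_isContained_kneserGraph_succ (hr : r ≠ 0) (hn : 2 ≤ n.choose r)
    (hham : cycleGraph (n.choose r) ⊑ kneserGraph (Fin n) r) (h₁ : n.choose r ≤ d)
    (h₂ : d ≤ (n + 1).choose r) (h₃ : d ≤ 2 * (n + 1 - r).choose r) :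
    cycleGraph d ⊑ kneserGraph (Fin (n + 1)) r := by
  let φ : Copy (kneserGraph (Fin n) r) (kneserGraph (Fin (n + 1)) r) :=
    kneserGraphMap Fin.castSuccEmb
  obtain ⟨f, hf⟩ := (cycleGraph_isContained_iff_exists_isCycleTraversal hn).mp hham
  have hsurj : Surjective f := hf.surjective_of_card_eq (card_kneserGraph_fin n r)
  have hcover : (kneserGraph (Fin (n + 1)) r).IsVertexCover (Set.range (φ ∘ f)) := by
    rw [hsurj.range_comp]
    exact isVertexCover_range_kneserGraphMap <| (Set.subsingleton_singleton (a := Fin.last n)).anti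
      fun x hx => not_not.mp (mt Fin.exists_castSucc_eq.mpr hx)
  obtain ⟨g, hg, -⟩ := (hf.comp_copy φ).exists_of_isVertexCover hcover h₁
    (h₂.trans_eq (card_kneserGraph_fin _ _).symm) fun v _ => by
      rwa [(kneserGraph_isRegularOfDegree hr).degree_eq, Fintype.card_fin]
  exact (cycleGraph_isContained_iff_exists_isCycleTraversal (hn.trans h₁)).mpr ⟨g, hg⟩

theorem choose_two_add_two_le_two_mul (h : 6 ≤ n) : (n + 2).choose 2 ≤ 2 * n.choose 2 := by
  induction n, h using Nat.le_induction with
  | base => decide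
  | succ n h ih =>
    simp only [Nat.choose_succ_succ' _ 1, Nat.choose_one_right, Nat.reduceAdd] at ih ⊢
    omega

theorem cycleGraph_isContained_kneserGraph (hn : 6 ≤ n) (h₁ : 3 ≤ d) (h₂ : d ≤ n.choose 2) :
    cycleGraph d ⊑ kneserGraph (Fin n) 2 := by
  induction n, hn using Nat.le_induction generalizing d with
  | base => exact cycleGraph_isContained_kneserGraph_six h₁ h₂
  | succ n hn ih =>
    rcases le_total d (n.choose 2) with h | h
    · exact (ih h₁ h).trans (kneserGraph_fin_isContained_of_le n.le_succ)
    have three_le : 3 ≤ n.choose 2 := le_trans (by decide) (Nat.choose_le_choose 2 hn)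
    -- A vertex of `K(7, 2)` has only ten neighbors, exactly half of a cycle of length 20.
    by_cases hd : d = 21 ∧ n = 6
    · obtain ⟨rfl, rfl⟩ := hd
      exact cycleGraph_twentyOne_isContained_kneserGraph_seven
    refine cycleGraph_isContained_kneserGraph_succ two_ne_zero (by omega)
      (ih three_le le_rfl) h h₂ ?_
    obtain rfl | hn := hn.eq_or_lt
    · have : d ≤ 21 := h₂
      have : 2 * (6 + 1 - 2).choose 2 = 20 := rfl
      omega
    · obtain ⟨n, rfl⟩ := Nat.exists_eq_add_of_le' hn
      exact h₂.trans (choose_two_add_two_le_two_mul (by omega))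

end KneserCycles

theorem ceil_le_add_two_iff_le_choose_two {d : ℕ} (hd : d ≠ 0) (m : ℕ) :
    ⌈(5 + √(1 + 8 * (d : ℝ))) / 2⌉₊ ≤ m + 2 ↔ d ≤ m.choose 2 := by
  have hd_pos : 0 < (d : ℝ) := by positivity
  have sqrt_pos : 0 < √(1 + 8 * (d : ℝ)) := by positivity
  have ceil_le_iff_sqrt_le :
      ⌈(5 + √(1 + 8 * (d : ℝ))) / 2⌉₊ ≤ m + 2 ↔ √(1 + 8 * (d : ℝ)) ≤ 2 * m - 1 := by
    rw [Nat.ceil_le]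
    push_cast
    constructor <;> intro h <;> linarith
  rw [ceil_le_iff_sqrt_le, ← Nat.cast_le (α := ℝ), Nat.cast_choose_two]
  obtain rfl | hm := Nat.eq_zero_or_pos m
  · rw [Nat.cast_zero]
    constructor <;> intro h <;> linarith
  · have : (1 : ℝ) ≤ m := by exact_mod_cast hm
    rw [Real.sqrt_le_left (by linarith)]
    constructor <;> intro h <;> linarith

/-- The 2-tone chromatic number of the wheel `W_d` (`d ≥ 3`):
7 for `d ∈ {5,6,8,9}`; 8 for `d ∈ {3,4,7}` or `10 ≤ d ≤ 15`;
and `⌈(5 + √(1+8d))/2⌉` for `d ≥ 11`. -/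
theorem stmt10 (d : ℕ) (hd : 3 ≤ d) :
    ((d = 5 ∨ d = 6 ∨ d = 8 ∨ d = 9) → toneNumber (wheelGraph d) 2 = 7) ∧
    ((d = 3 ∨ d = 4 ∨ d = 7 ∨ (10 ≤ d ∧ d ≤ 15)) → toneNumber (wheelGraph d) 2 = 8) ∧
    (11 ≤ d → toneNumber (wheelGraph d) 2 =
      ⌈(5 + Real.sqrt (1 + 8 * (d : ℝ))) / 2⌉₊) := by
  refine ⟨fun h => ?_, fun h => ?_, fun h => ?_⟩
  · exact toneNumber_wheelGraph_two_of_isLeast ⟨cycleGraph_isContained_kneserGraph_five h, fun m =>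
      lt_of_cycleGraph_isContained_kneserGraph (not_cycleGraph_isContained_kneserGraph_four hd)⟩
  · have hle : d ≤ 15 := by omega
    exact toneNumber_wheelGraph_two_of_isLeast ⟨cycleGraph_isContained_kneserGraph_six hd hle,
      fun m => lt_of_cycleGraph_isContained_kneserGraph
        (not_cycleGraph_isContained_kneserGraph_five (by omega))⟩
  · have ceil_le_iff := ceil_le_add_two_iff_le_choose_two (show d ≠ 0 by omega)
    have eight_le : 8 ≤ ⌈(5 + √(1 + 8 * (d : ℝ))) / 2⌉₊ :=
      lt_of_not_ge fun hle => absurd ((ceil_le_iff 5).mp hle) (not_le.mpr h)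
    obtain ⟨n, hn⟩ := Nat.exists_eq_add_of_le' (le_trans (by decide : 2 ≤ 8) eight_le)
    rw [hn] at ceil_le_iff eight_le ⊢
    simp only [Nat.add_le_add_iff_right] at ceil_le_iff
    exact toneNumber_wheelGraph_two_of_isLeast
      ⟨cycleGraph_isContained_kneserGraph (by omega) hd ((ceil_le_iff n).mp le_rfl),
        fun m hm => (ceil_le_iff m).mpr (le_choose_of_cycleGraph_isContained hm)⟩
end

section
/- Let G be the simple graph on vertex set {v₁, v₂, v₃, v₄, v₅} with edge set {v₁v₂, v₂v₃, v₁v₃, v₂v₅, v₅v₄, v₄v₃}. Then G admits no 3-tone 10-coloring; equivalently, τ₃(G) ≥ 11. -/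
/-- The graph on `{v₁,…,v₅}` (as `Fin 5`, with `vᵢ = i - 1`) with edges
`v₁v₂, v₂v₃, v₁v₃, v₂v₅, v₅v₄, v₄v₃`. -/
def counterexampleGraph : SimpleGraph (Fin 5) :=
  SimpleGraph.fromEdgeSet {s(0, 1), s(1, 2), s(0, 2), s(1, 4), s(4, 3), s(3, 2)}

/-!
Count colors on the triangle `v₁v₂v₃` first: it uses `3t` of them. Each of `v₄`, `v₅` is adjacent to
one triangle vertex and at distance two from the others, so it takes at most two colors from
the triangle and needs `t - 2` further ones. As `v₄` and `v₅` are adjacent, these further colors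
are distinct, so at least `3t + 2(t - 2) = 5t - 4` colors are needed.
-/

section

open Finset SimpleGraph

variable {V W : Type*} {G : SimpleGraph V} {H : SimpleGraph W} {t k : ℕ}

namespace IsTToneColoring

variable {f : V → Finset ℕ} {u v w : V}

theorem mono {l : ℕ} (hf : IsTToneColoring G t k f) (hkl : k ≤ l) : IsTToneColoring G t l f :=
  ⟨fun v => ⟨(hf.1 v).1.trans (Icc_subset_Icc_right hkl), (hf.1 v).2⟩, hf.2⟩

theorem card_inter_lt_length (hf : IsTToneColoring G t k f) (huv : u ≠ v) (p : G.Walk u v) :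
    #(f u ∩ f v) < p.length :=
  (hf.2 u v huv p.reachable).trans_le (dist_le p)

theorem comp_copy (hf : IsTToneColoring G t k f) (φ : Copy H G) :
    IsTToneColoring H t k (f ∘ φ) := by
  refine ⟨fun x => hf.1 (φ x), fun x y hxy hreach => ?_⟩
  obtain ⟨p, hp⟩ := hreach.exists_walk_length_eq_dist
  calc #(f (φ x) ∩ f (φ y))
      < (p.map φ.toHom).length := hf.card_inter_lt_length (φ.injective.ne hxy) _
    _ = H.dist x y := by rw [Walk.length_map, hp]

theorem disjoint_of_adj (hf : IsTToneColoring G t k f) (huv : G.Adj u v) :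
    Disjoint (f u) (f v) := by
  have hlt : #(f u ∩ f v) < 1 := hf.card_inter_lt_length huv.ne huv.toWalk
  rwa [Nat.lt_one_iff, card_eq_zero, ← disjoint_iff_inter_eq_empty] at hlt

theorem card_inter_le_one_of_adj_adj (hf : IsTToneColoring G t k f) (huv : u ≠ v)
    (huw : G.Adj u w) (hwv : G.Adj w v) : #(f u ∩ f v) ≤ 1 :=
  Nat.lt_succ_iff.1 (hf.card_inter_lt_length huv (.cons huw hwv.toWalk))

theorem card_union_of_triangle (hf : IsTToneColoring G t k f) (huv : G.Adj u v) (huw : G.Adj u w)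
    (hvw : G.Adj v w) : #(f u ∪ f v ∪ f w) = 3 * t := by
  have hdisj : Disjoint (f u ∪ f v) (f w) :=
    disjoint_union_left.2 ⟨hf.disjoint_of_adj huw, hf.disjoint_of_adj hvw⟩
  rw [card_union_of_disjoint hdisj, card_union_of_disjoint (hf.disjoint_of_adj huv),
    (hf.1 u).2, (hf.1 v).2, (hf.1 w).2]
  ring

theorem le_card_sdiff_triangle_add_two {x : V} (hf : IsTToneColoring G t k f) (hxw : G.Adj x w)
    (hwu : G.Adj w u) (hwv : G.Adj w v) (hxu : x ≠ u) (hxv : x ≠ v) :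
    t ≤ #(f x \ (f u ∪ f v ∪ f w)) + 2 := by
  have hinter : f x ∩ (f u ∪ f v ∪ f w) = f x ∩ f u ∪ f x ∩ f v := by
    rw [inter_union_distrib_left, inter_union_distrib_left,
      disjoint_iff_inter_eq_empty.1 (hf.disjoint_of_adj hxw), union_empty]
  calc t = #(f x \ (f u ∪ f v ∪ f w)) + #(f x ∩ f u ∪ f x ∩ f v) := by
        rw [← hinter, card_sdiff_add_card_inter, (hf.1 x).2]
    _ ≤ #(f x \ (f u ∪ f v ∪ f w)) + (#(f x ∩ f u) + #(f x ∩ f v)) := by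
        gcongr
        exact card_union_le _ _
    _ ≤ #(f x \ (f u ∪ f v ∪ f w)) + (1 + 1) := by
        gcongr
        · exact hf.card_inter_le_one_of_adj_adj hxu hxw hwu
        · exact hf.card_inter_le_one_of_adj_adj hxv hxw hwv

end IsTToneColoring

theorem exists_isTToneColoring [Finite V] (G : SimpleGraph V) (t : ℕ) :
    ∃ k f, IsTToneColoring G t k f := by
  obtain ⟨n, ⟨e⟩⟩ := Finite.exists_equiv_fin V
  refine ⟨n * t, fun v => Ioc (e v * t) ((e v + 1) * t), fun v => ⟨fun c hc => ?_, ?_⟩,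
    fun u v huv hreach => ?_⟩
  · have hle : (e v + 1) * t ≤ n * t := Nat.mul_le_mul_right t (e v).isLt
    rw [mem_Ioc] at hc
    exact mem_Icc.2 ⟨by omega, hc.2.trans hle⟩
  · rw [Nat.card_Ioc, Nat.succ_mul, Nat.add_sub_cancel_left]
  · have hmono : Monotone fun i : ℕ => i * t := fun _ _ hij => Nat.mul_le_mul_right t hij
    have hdisj : Disjoint (Ioc (e u * t) ((e u + 1) * t)) (Ioc (e v * t) ((e v + 1) * t)) := by
      rw [← disjoint_coe, coe_Ioc, coe_Ioc]
      exact hmono.pairwise_disjoint_on_Ioc_succ (Fin.val_injective.ne (e.injective.ne huv))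
    rw [disjoint_iff_inter_eq_empty.1 hdisj, card_empty]
    exact hreach.pos_dist_of_ne huv

theorem lt_toneNumber_iff [Finite V] :
    k < toneNumber G t ↔ ¬ ∃ f : V → Finset ℕ, IsTToneColoring G t k f := by
  refine ⟨Nat.notMem_of_lt_sInf, fun hk => ?_⟩
  by_contra! hle
  obtain ⟨f, hf⟩ : ∃ f, IsTToneColoring G t (toneNumber G t) f :=
    Nat.sInf_mem (exists_isTToneColoring G t)
  exact hk ⟨f, hf.mono hle⟩

theorem five_mul_le_of_isTToneColoring_counterexampleGraph {f : Fin 5 → Finset ℕ}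
    (hf : IsTToneColoring counterexampleGraph t k f) : 5 * t ≤ k + 4 := by
  have h01 : counterexampleGraph.Adj 0 1 := by simp [counterexampleGraph]
  have h02 : counterexampleGraph.Adj 0 2 := by simp [counterexampleGraph]
  have h12 : counterexampleGraph.Adj 1 2 := by simp [counterexampleGraph]
  have h32 : counterexampleGraph.Adj 3 2 := by simp [counterexampleGraph]
  have h41 : counterexampleGraph.Adj 4 1 := by simp [counterexampleGraph]
  have h34 : counterexampleGraph.Adj 3 4 := by simp [counterexampleGraph]
  set T := f 0 ∪ f 1 ∪ f 2 with hT
  have hcardT : #T = 3 * t := hf.card_union_of_triangle h01 h02 h12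
  have hcard3 : t ≤ #(f 3 \ T) + 2 :=
    hf.le_card_sdiff_triangle_add_two h32 h02.symm h12.symm (by decide) (by decide)
  have hcard4 : t ≤ #(f 4 \ T) + 2 := by
    rw [hT, union_right_comm]
    exact hf.le_card_sdiff_triangle_add_two h41 h01.symm h12 (by decide) (by decide)
  have hdisj34 : Disjoint (f 3 \ T) (f 4 \ T) :=
    (hf.disjoint_of_adj h34).mono sdiff_subset sdiff_subset
  have hdisjT : Disjoint T (f 3 \ T ∪ f 4 \ T) :=
    disjoint_union_right.2 ⟨disjoint_sdiff, disjoint_sdiff⟩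
  have hsubset : T ∪ (f 3 \ T ∪ f 4 \ T) ⊆ Icc 1 k := by
    have hcolor (v : Fin 5) : f v ⊆ Icc 1 k := (hf.1 v).1
    exact union_subset (union_subset (union_subset (hcolor 0) (hcolor 1)) (hcolor 2))
      (union_subset (sdiff_subset.trans (hcolor 3)) (sdiff_subset.trans (hcolor 4)))
  have hcard : #T + (#(f 3 \ T) + #(f 4 \ T)) ≤ k := by
    rw [← card_union_of_disjoint hdisj34, ← card_union_of_disjoint hdisjT]
    simpa using card_le_card hsubset
  omega

theorem stmt11_general [Finite V] (hG : counterexampleGraph ⊑ G) (hk : k + 4 < 5 * t) :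
    (¬ ∃ f : V → Finset ℕ, IsTToneColoring G t k f) ∧ k + 1 ≤ toneNumber G t := by
  obtain ⟨φ⟩ := hG
  have hnone : ¬ ∃ f : V → Finset ℕ, IsTToneColoring G t k f := fun ⟨_, hf⟩ =>
    hk.not_ge (five_mul_le_of_isTToneColoring_counterexampleGraph (hf.comp_copy φ))
  exact ⟨hnone, lt_toneNumber_iff.2 hnone⟩

end

/-- The above graph admits no 3-tone 10-coloring; equivalently `τ₃(G) ≥ 11`. -/
theorem stmt11 :
    (¬ ∃ f : Fin 5 → Finset ℕ, IsTToneColoring counterexampleGraph 3 10 f) ∧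
    11 ≤ toneNumber counterexampleGraph 3 :=
  stmt11_general (.refl _) (by norm_num)
end
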